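/- Let 1 ≤ i ≤ j ≤ n and let w be in B_n. Then, in Z[t], the sum over all w-admissible subsequences T of Phi_{ij} of t^{(l(w) + l(wT) - |T|)/2} (1-t)^{|T|} equals t^{l_+(w) + l^{ij}_-(w)}. -/

import Mathlib

/-!
The sum is computed by descending induction along `Φ`. Splitting the admissible subsequences of
`Φ_{ij}` according to whether they contain the first reflection `r = (i, -j)` gives, with `Ψ` the
suffix after `r`,
`S(w, Φ_{ij}) = S(w, Ψ) + [ℓ(wr) < ℓ(w)] (1 - t) t^{(ℓ(w) - ℓ(wr) - 1)/2} S(wr, Ψ)`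
(`subSum_cons`, `term_cons`, `term_cons_up`).

Write `ℓ₋ = before + [w(i) ≻ -w(j)] + after`, according to the position of the pairs relative to
`(i, -j)` in `Φ`. The two facts that drive the induction are
* `invariant`: `ℓ₊ + before - after` takes the same value at `w` and at `wr`;
* `foll_mono`: `after` does not increase from `w` to `wr` if `w(i) ≻ -w(j)`.

Both are checked position by position. If `w(i) ≻ -w(j)` they give `ℓ(w) - ℓ(wr) = 2d + 1`, where
`d ≥ 0` is the drop of `after`, hence also of `ℓ₊ + before` (`step_down`). In the recursion, with
`A = ℓ₊(w) + ℓ^{ij}_-(w)`, the first term is then `t^{A+1}` and the second is `(1 - t) t^A`, with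
sum `t^A`. If `w(i) ≺ -w(j)` then `ℓ(wr) > ℓ(w)` (`step_up`), the second term is absent, and the
exponent does not change. The oddness of the length drops also makes the halved, truncated exponent
in the summand exact (`chain_parity`).
-/

open scoped BigOperators

namespace HL

/-! ### The order `≺` on nonzero integers in `[-n,n]`:
`1 ≺ 2 ≺ ... ≺ n ≺ -n ≺ -(n-1) ≺ ... ≺ -1`. -/

def slt (a b : ℤ) : Prop :=
  (0 < a ∧ b < 0) ∨ (0 < a ∧ 0 < b ∧ a < b) ∨ (a < 0 ∧ b < 0 ∧ a < b)

instance slt.dec (a b : ℤ) : Decidable (slt a b) := by unfold slt; infer_instance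

def sle (a b : ℤ) : Prop := slt a b ∨ a = b

instance sle.dec (a b : ℤ) : Decidable (sle a b) := by unfold sle; infer_instance

/-! ### Signed permutations (windows), reflections acting on the right -/

/-- The right action of a reflection on a window (or column), with 1-based
positions.  The reflection `(i, j)` with `j > 0` transposes positions `i` and
`j`; the reflection `(i, -j)` (i.e. `(i,\bar\jmath)`) with `i ≠ j` transposes
positions `i, j` and negates both entries; `(i, -i)` negates position `i`. -/
def applyRefl (l : List ℤ) (t : ℕ × ℤ) : List ℤ :=
  if 0 < t.2 then
    (l.set (t.1 - 1) (l.getD (t.2.toNat - 1) 0)).set (t.2.toNat - 1) (l.getD (t.1 - 1) 0)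
  else
    if t.1 = (-t.2).toNat then l.set (t.1 - 1) (-(l.getD (t.1 - 1) 0))
    else (l.set (t.1 - 1) (-(l.getD ((-t.2).toNat - 1) 0))).set ((-t.2).toNat - 1)
          (-(l.getD (t.1 - 1) 0))

def applyAll (w : List ℤ) (T : List (ℕ × ℤ)) : List ℤ := T.foldl applyRefl w

/-- The word `w[i,j] = w(i) w(i+1) ... w(j)`, 1-based and inclusive. -/
def word (l : List ℤ) (i j : ℕ) : List ℤ := (l.drop (i - 1)).take (j + 1 - i)

/-- `N_{ab}(u)` = number of letters `c` of the word `u` with `a ≺ c ≺ b`. -/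
def Nab (a b : ℤ) (u : List ℤ) : ℕ :=
  (u.filter (fun c => decide (slt a c ∧ slt c b))).length

/-- `ℓ₊(w) = #{(k,l) : k < l, w(k) ≻ w(l)}`. -/
def lplus (l : List ℤ) : ℕ :=
  (((Finset.range l.length) ×ˢ (Finset.range l.length)).filter
    (fun p => p.1 < p.2 ∧ slt (l.getD p.2 0) (l.getD p.1 0))).card

/-- `ℓ₋(w) = #{(k,l) : k ≤ l, w(k) ≻ -w(l)}`. -/
def lminus (l : List ℤ) : ℕ :=
  (((Finset.range l.length) ×ˢ (Finset.range l.length)).filter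
    (fun p => p.1 ≤ p.2 ∧ slt (-(l.getD p.2 0)) (l.getD p.1 0))).card

/-- The Coxeter length of a signed permutation given by its window. -/
def len (l : List ℤ) : ℕ := lplus l + lminus l

/-- The (finite) set of windows of all signed permutations in `B_n`. -/
def allWindows (n : ℕ) : Finset (List ℤ) :=
  Finset.image (fun w : Equiv.Perm (Fin n) × (Fin n → Bool) =>
    (List.finRange n).map (fun i =>
      if w.2 i then -(((w.1 i : ℕ) : ℤ) + 1) else ((w.1 i : ℕ) : ℤ) + 1)) Finset.univ

/-- `w`-admissibility of a sequence of reflections: a strictly decreasing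
chain in Bruhat order (recorded via the length function). -/
def decChain : List ℤ → List (ℕ × ℤ) → Bool
  | _, [] => true
  | w, t :: ts => (decide (len (applyRefl w t) < len w)) && decChain (applyRefl w t) ts

/-- Increasing-admissibility: a strictly increasing chain. -/
def incChain : List ℤ → List (ℕ × ℤ) → Bool
  | _, [] => true
  | w, t :: ts => (decide (len w < len (applyRefl w t))) && incChain (applyRefl w t) ts

/-- The subsequence of a chain `Γ` selected by a set `J` of (0-based) positions. -/
def selChain (Γ : List (ℕ × ℤ)) (J : Finset ℕ) : List (ℕ × ℤ) :=
  (J.sort (· ≤ ·)).map (fun j => Γ.getD j (0, 0))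

/-! ### The `λ`-chain of type `C_n` -/

/-- `Γ'_j = ((1,-j),(2,-j),...,(j-1,-j))`. -/
def gammaPrime (j : ℕ) : List (ℕ × ℤ) := (List.range (j - 1)).map (fun r => (r + 1, -(j : ℤ)))

/-- `Γ_j(k) = ((1,-j),...,(j-1,-j),(j,-(k+1)),...,(j,-n),(j,-j),(j,n),...,(j,k+1))`. -/
def gammaJK (n j k : ℕ) : List (ℕ × ℤ) :=
  gammaPrime j
    ++ (List.range (n - k)).map (fun r => (j, -((k + 1 + r : ℕ) : ℤ)))
    ++ [(j, -(j : ℤ))]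
    ++ (List.range (n - k)).map (fun r => (j, ((n - r : ℕ) : ℤ)))

/-- `Γ(k) = Γ'_2 ⋯ Γ'_k Γ_1(k) ⋯ Γ_k(k)` (type `C_n`). -/
def gammaChain (n k : ℕ) : List (ℕ × ℤ) :=
  ((List.range (k - 1)).map (fun r => gammaPrime (r + 2))).flatten
    ++ ((List.range k).map (fun r => gammaJK n (r + 1) k)).flatten

/-- `λ'_i = #{j : λ_j ≥ i}`, the conjugate partition. -/
def conj (n : ℕ) (lam : Fin n → ℕ) (i : ℕ) : ℕ :=
  (Finset.univ.filter (fun j : Fin n => i ≤ lam j)).card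

/-- `λ_1`, the largest part. -/
def lamOne (n : ℕ) (lam : Fin n → ℕ) : ℕ := Finset.univ.sup lam

/-- The fixed `λ`-chain `Γ = Γ^{λ_1} Γ^{λ_1-1} ⋯ Γ^1` with `Γ^i = Γ(λ'_i)`. -/
def lambdaChain (n : ℕ) (lam : Fin n → ℕ) : List (ℕ × ℤ) :=
  ((List.range (lamOne n lam)).map
    (fun r => gammaChain n (conj n lam (lamOne n lam - r)))).flatten

/-- The set `A(λ)` of admissible pairs `(w, J)`. -/
def ASet (n : ℕ) (lam : Fin n → ℕ) : Set (List ℤ × Finset ℕ) :=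
  {p | p.1 ∈ allWindows n ∧ p.2 ⊆ Finset.range (lambdaChain n lam).length ∧
    decChain p.1 (selChain (lambdaChain n lam) p.2) = true}

/-! ### Roots, coroots, affine reflections, and the weight `μ(T)` -/

/-- The root of type `C_n` corresponding to a symbol: `(i,j) ↦ ε_i - ε_j`,
`(i,-j) ↦ ε_i + ε_j` for `i < j`, and `(i,-i) ↦ 2ε_i`. -/
def rootVec (n : ℕ) (β : ℕ × ℤ) : Fin n → ℤ := fun r =>
  (if ((r : ℕ) + 1 : ℤ) = (β.1 : ℤ) then 1 else 0) +
  (if 0 < β.2 then (if ((r : ℕ) + 1 : ℤ) = β.2 then -1 else 0)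
   else (if ((r : ℕ) + 1 : ℤ) = -β.2 then 1 else 0))

/-- The coroot (type `C_n`): `(2ε_i)^∨ = ε_i`, the long rootss are unchanged. -/
def corootVec (n : ℕ) (β : ℕ × ℤ) : Fin n → ℤ :=
  if β.2 = -(β.1 : ℤ) then (fun r => if ((r : ℕ) + 1 : ℤ) = (β.1 : ℤ) then 1 else 0)
  else rootVec n β

/-- Standard inner product on `ℤ^n`. -/
def ip (n : ℕ) (u v : Fin n → ℤ) : ℤ := ∑ r, u r * v r

/-- The affine reflection in the hyperplane `{v : ⟨v, β^∨⟩ = c}`. -/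
def affRefl (n : ℕ) (β : ℕ × ℤ) (c : ℤ) (v : Fin n → ℤ) : Fin n → ℤ :=
  fun r => v r - (ip n v (corootVec n β) - c) * rootVec n β r

/-- `l_k = #{j ≤ k : β_j = β_k}` (here `k` is 0-based). -/
def lCount (Γ : List (ℕ × ℤ)) (k : ℕ) : ℕ := (Γ.take (k + 1)).count (Γ.getD k (0, 0))

/-- `μ(J) = \hat r_{j_1} ⋯ \hat r_{j_s}(λ)` for `J = {j_1 < ... < j_s}`. -/
def muJ (n : ℕ) (Γ : List (ℕ × ℤ)) (lamVec : Fin n → ℤ) (J : Finset ℕ) : Fin n → ℤ :=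
  (J.sort (· ≤ ·)).foldr (fun j v => affRefl n (Γ.getD j (0, 0)) ((lCount Γ j : ℕ) : ℤ) v) lamVec

/-- The linear action of a signed permutation (given by its window) on `ℤ^n`:
`w(ε_i) = ε_{w(i)}` with `ε_{-i} = -ε_i`. -/
def wAct (n : ℕ) (w : List ℤ) (v : Fin n → ℤ) : Fin n → ℤ := fun r =>
  ∑ i : Fin n, ((if w.getD i 0 = ((r : ℕ) + 1 : ℤ) then v i else 0) +
    (if w.getD i 0 = -(((r : ℕ) + 1 : ℤ)) then -(v i) else 0))

def lamVec (n : ℕ) (lam : Fin n → ℕ) : Fin n → ℤ := fun i => (lam i : ℤ)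

/-! ### Fillings of the doubled shape `\hat λ` -/

/-- A filling of the doubled shape, recorded by its primed columns `C'_{i,k}`
(`Cp i k`) and unprimed columns `C_{i,j}` (`Cu i j`). -/
structure Filling where
  Cp : ℕ → ℕ → List ℤ
  Cu : ℕ → ℕ → List ℤ

def validP (n : ℕ) (lam : Fin n → ℕ) (i k : ℕ) : Prop :=
  1 ≤ i ∧ i ≤ lamOne n lam ∧ 2 ≤ k ∧ k ≤ conj n lam i

def validU (n : ℕ) (lam : Fin n → ℕ) (i j : ℕ) : Prop :=
  1 ≤ i ∧ i ≤ lamOne n lam ∧ 1 ≤ j ∧ j ≤ conj n lam i ∧ (i = 1 → j = 1)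

instance validP.dec (n : ℕ) (lam : Fin n → ℕ) (i k : ℕ) : Decidable (validP n lam i k) := by
  unfold validP; infer_instance

instance validU.dec (n : ℕ) (lam : Fin n → ℕ) (i j : ℕ) : Decidable (validU n lam i j) := by
  unfold validU; infer_instance

/-- The right neighbour `C'_{i,k+1}` of `C'_{i,k}`, with the convention
`C'_{i,λ'_i+1} = C_{i,1}`. -/
def CpNxt (n : ℕ) (lam : Fin n → ℕ) (F : Filling) (i k : ℕ) : List ℤ :=
  if k < conj n lam i then F.Cp i (k + 1) else F.Cu i 1

/-- The right neighbour `C_{i,j+1}` of `C_{i,j}`, with the conventions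
`C_{i,λ'_i+1} = C'_{i-1,2}` (if `λ'_{i-1} > 1`) and `C_{i,λ'_i+1} = C_{i-1,1}`
(if `λ'_{i-1} = 1`). -/
def CuNxt (n : ℕ) (lam : Fin n → ℕ) (F : Filling) (i j : ℕ) : List ℤ :=
  if j < conj n lam i then F.Cu i (j + 1)
  else if 2 ≤ conj n lam (i - 1) then F.Cp (i - 1) 2 else F.Cu (i - 1) 1

/-- No two entries `a, b` of a column with `a = ±b`. -/
def colDistinct (c : List ℤ) : Prop :=
  ∀ p q : ℕ, p < q → q < c.length →
    c.getD p 0 ≠ c.getD q 0 ∧ c.getD p 0 ≠ -(c.getD q 0)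

/-- `R = (r_1 < r_2 < ... < r_p)` with `1 ≤ r_t < j ≤ d`. -/
def sortedR (R : List ℕ) (j d : ℕ) : Prop :=
  List.Chain' (· < ·) R ∧ (∀ r ∈ R, 1 ≤ r ∧ r < j) ∧ 1 ≤ j ∧ j ≤ d

/-- `D (r_1,-j) (r_2,-j) ⋯ (r_p,-j)`. -/
def cycleApply (D : List ℤ) (R : List ℕ) (j : ℕ) : List ℤ :=
  R.foldl (fun E r => applyRefl E (r, -(j : ℤ))) D

/-- The relation between `C_{i,j+1}[1,λ'_i] = E` and `C_{i,j} = D` in a filling: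
`E` differs from `D' = D(r_1,-j)⋯(r_p,-j)` only in position `j`,
`E(j) ∉ {±D'(r) : r ≠ j}` and `E(j) ⪯ D'(j)`. -/
def unprimedTrans (D E : List ℤ) (R : List ℕ) (j d : ℕ) : Prop :=
  (∀ r, 1 ≤ r → r ≤ d → r ≠ j →
    E.getD (r - 1) 0 = (cycleApply D R j).getD (r - 1) 0) ∧
  (∀ r, 1 ≤ r → r ≤ d → r ≠ j →
    E.getD (j - 1) 0 ≠ (cycleApply D R j).getD (r - 1) 0 ∧
    E.getD (j - 1) 0 ≠ -((cycleApply D R j).getD (r - 1) 0)) ∧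
  sle (E.getD (j - 1) 0) ((cycleApply D R j).getD (j - 1) 0)

/-- The set `F(λ)` of fillings of the doubled shape `\hat λ`. -/
def FSet (n : ℕ) (lam : Fin n → ℕ) : Set Filling :=
  {F |
    -- shape
    (∀ i k, (validP n lam i k → (F.Cp i k).length = conj n lam i) ∧
      (¬ validP n lam i k → F.Cp i k = [])) ∧
    (∀ i j, (validU n lam i j → (F.Cu i j).length = conj n lam i) ∧
      (¬ validU n lam i j → F.Cu i j = [])) ∧
    -- entries lie in `{±1, ..., ±n}`
    (∀ i k, validP n lam i k → ∀ a ∈ F.Cp i k, 1 ≤ a.natAbs ∧ a.natAbs ≤ n) ∧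
    (∀ i j, validU n lam i j → ∀ a ∈ F.Cu i j, 1 ≤ a.natAbs ∧ a.natAbs ≤ n) ∧
    -- (1) rows weakly decrease from left to right
    (∀ i k, validP n lam i k → ∀ r, 1 ≤ r → r ≤ conj n lam i →
      sle ((CpNxt n lam F i k).getD (r - 1) 0) ((F.Cp i k).getD (r - 1) 0)) ∧
    (∀ i j, 2 ≤ i → validU n lam i j → ∀ r, 1 ≤ r → r ≤ conj n lam i →
      sle ((CuNxt n lam F i j).getD (r - 1) 0) ((F.Cu i j).getD (r - 1) 0)) ∧
    -- (2) no column contains `a, b` with `a = ±b`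
    (∀ i k, validP n lam i k → colDistinct (F.Cp i k)) ∧
    (∀ i j, validU n lam i j → colDistinct (F.Cu i j)) ∧
    -- (3) primed transitions: `C'_{i,k+1} = C'_{i,k}(r_1,-k)⋯(r_p,-k)`
    (∀ i k, validP n lam i k → ∃ R : List ℕ, sortedR R k (conj n lam i) ∧
      CpNxt n lam F i k = cycleApply (F.Cp i k) R k) ∧
    -- (3) unprimed transitions
    (∀ i j, 2 ≤ i → validU n lam i j → ∃ R : List ℕ, sortedR R j (conj n lam i) ∧
      unprimedTrans (F.Cu i j) ((CuNxt n lam F i j).take (conj n lam i)) R j (conj n lam i))}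

/-! ### The filling map `f` -/

/-- Offset in `Γ` of the beginning of block `Γ^i` (the blocks are listed for
`i = λ_1` down to `1`). -/
def offsetBlock (n : ℕ) (lam : Fin n → ℕ) (i : ℕ) : ℕ :=
  ∑ r ∈ Finset.Ico (i + 1) (lamOne n lam + 1), (gammaChain n (conj n lam r)).length

/-- Offset in `Γ` of the beginning of the factor `Γ'_{i,k}`.-/
def offsetP (n : ℕ) (lam : Fin n → ℕ) (i k : ℕ) : ℕ :=
  offsetBlock n lam i + ∑ j ∈ Finset.Ico 2 k, (gammaPrime j).length

/-- Offset in `Γ` of the beginning of the factor `Γ_{i,j}`.-/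
def offsetU (n : ℕ) (lam : Fin n → ℕ) (i j : ℕ) : ℕ :=
  offsetBlock n lam i + (∑ k ∈ Finset.Ico 2 (conj n lam i + 1), (gammaPrime k).length)
    + ∑ j' ∈ Finset.Ico 1 j, (gammaJK n j' (conj n lam i)).length

/-- `π = w ⋅ (all selected reflections at positions < off)`. -/
def piW (n : ℕ) (lam : Fin n → ℕ) (w : List ℤ) (J : Finset ℕ) (off : ℕ) : List ℤ :=
  applyAll w (selChain (lambdaChain n lam) (J.filter (fun x => x < off)))

/-- The filling map `f`, sending an (admissible) pair `(w, J)` to a filling of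
the doubled shape `\hat λ`. -/
def fMap (n : ℕ) (lam : Fin n → ℕ) (w : List ℤ) (J : Finset ℕ) : Filling where
  Cp := fun i k => if validP n lam i k
    then (piW n lam w J (offsetP n lam i k)).take (conj n lam i) else []
  Cu := fun i j => if validU n lam i j
    then (piW n lam w J (offsetU n lam i j)).take (conj n lam i) else []

/-! ### Content of a filling -/

/-- The columns `\bar{C}^i = C'_{i,2} C_{i,1}` (left to right, `i = λ_1, ..., 1`)
of the compressed filling `\barσ` of shape `2λ`; by the conventions,
`C'_{i,2} = C_{i,1}` when `λ'_i = 1`. -/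
def compCols (n : ℕ) (lam : Fin n → ℕ) (F : Filling) : List (List ℤ) :=
  ((List.range (lamOne n lam)).map (fun t =>
    [(if 2 ≤ conj n lam (lamOne n lam - t) then F.Cp (lamOne n lam - t) 2
      else F.Cu (lamOne n lam - t) 1), F.Cu (lamOne n lam - t) 1])).flatten

/-- The content of a list of columns: the `i`-th coordinate is half the
difference between the numbers of occurrences of `i` and of `-i`. -/
def ctCols (n : ℕ) (cols : List (List ℤ)) : Fin n → ℚ := fun r =>
  ((cols.flatten.count (((r : ℕ) + 1 : ℕ) : ℤ) : ℚ) -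
    (cols.flatten.count (-(((r : ℕ) + 1 : ℕ) : ℤ)) : ℚ)) / 2

/-- The content `ct(σ)` of a filling `σ` of `\hatλ`. -/
def ctQ (n : ℕ) (lam : Fin n → ℕ) (F : Filling) : Fin n → ℚ :=
  ctCols n (compCols n lam F)

/-! ### The statistics `N(D,C)` and `des(D,C)` -/

/-- `σ_{ab} = 1` if `a` and `b` are both negative, else `0`. -/
def sigmaAB (a b : ℤ) : ℕ := if a < 0 ∧ b < 0 then 1 else 0

def allEntries (n : ℕ) : List ℤ :=
  (List.range n).map (fun r => ((r + 1 : ℕ) : ℤ)) ++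
    (List.range n).map (fun r => -((r + 1 : ℕ) : ℤ))

/-- Case 1: `N(D, D(r,-j)) = N_{\bar b, a}(D[r+1,j-1]) +
#{c : \bar b ≺ c ≺ a, c ∉ ±D[1,j]} + σ_{ab}` where `a = D(r)`, `b = D(j)`. -/
def N1 (n : ℕ) (D : List ℤ) (r j : ℕ) : ℕ :=
  Nab (-(D.getD (j - 1) 0)) (D.getD (r - 1) 0) (word D (r + 1) (j - 1)) +
  ((allEntries n).filter (fun c => decide (slt (-(D.getD (j - 1) 0)) c ∧
    slt c (D.getD (r - 1) 0) ∧ c ∉ D.take j ∧ c ∉ (D.take j).map (fun x => -x)))).length +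
  sigmaAB (D.getD (r - 1) 0) (D.getD (j - 1) 0)

/-- Case 2: `N(D, D(r_1,-j)⋯(r_p,-j)) = ∑ N(D_{t-1}, D_t)`. -/
def cycleN (n : ℕ) : List ℤ → List ℕ → ℕ → ℕ
  | _, [], _ => 0
  | D, r :: rs, j => N1 n D r j + cycleN n (applyRefl D (r, -(j : ℤ))) rs j

/-- The possible values `(N(D,C), des(D,C))` arising from the case-by-case
definition of the statistics (cases 0, 2, 3; case 1 is case 2 with `p = 1`).
If `C` is one box taller than `D`, `C` is replaced by `C[1,d]`. -/
def NdesCand (n : ℕ) (D C : List ℤ) : Set (ℕ × ℕ) :=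
  {x |
    (C.take D.length = D ∧ x = (0, 0)) ∨
    (∃ j R, sortedR R j D.length ∧ R ≠ [] ∧ C.take D.length = cycleApply D R j ∧
      x = (cycleN n D R j, R.length)) ∨
    (∃ j R, sortedR R j D.length ∧
      (∀ r, 1 ≤ r → r ≤ D.length → r ≠ j →
        (C.take D.length).getD (r - 1) 0 = (cycleApply D R j).getD (r - 1) 0) ∧
      (∀ r, 1 ≤ r → r ≤ D.length → r ≠ j →
        (C.take D.length).getD (j - 1) 0 ≠ (cycleApply D R j).getD (r - 1) 0 ∧
        (C.take D.length).getD (j - 1) 0 ≠ -((cycleApply D R j).getD (r - 1) 0)) ∧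
      slt ((C.take D.length).getD (j - 1) 0) ((cycleApply D R j).getD (j - 1) 0) ∧
      x = (cycleN n D R j +
        Nab ((C.take D.length).getD (j - 1) 0) ((cycleApply D R j).getD (j - 1) 0)
          (word D (j + 1) D.length), R.length + 1))}

noncomputable def Nstat (n : ℕ) (D C : List ℤ) : ℕ :=
  sInf {v | ∃ d, (v, d) ∈ NdesCand n D C}

noncomputable def desStat (n : ℕ) (D C : List ℤ) : ℕ :=
  sInf {d | ∃ v, (v, d) ∈ NdesCand n D C}

/-- All columns of a filling of `\hatλ`, listed from left to right. -/
def colList (n : ℕ) (lam : Fin n → ℕ) (F : Filling) : List (List ℤ) :=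
  ((List.range (lamOne n lam)).map (fun t =>
    ((List.range (conj n lam (lamOne n lam - t) - 1)).map
      (fun s => F.Cp (lamOne n lam - t) (s + 2))) ++
    (if lamOne n lam - t = 1 then [F.Cu 1 1]
     else (List.range (conj n lam (lamOne n lam - t))).map
      (fun s => F.Cu (lamOne n lam - t) (s + 1))))).flatten

/-- Sum of a binary statistic over adjacent pairs of a list. -/
def adjSumN (f : List ℤ → List ℤ → ℕ) : List (List ℤ) → ℕ
  | a :: b :: rest => f a b + adjSumN f (b :: rest)
  | _ => 0

/-- `N(σ) = ∑_{i=1}^{m-1} N(C_{i+1}, C_i) + ℓ₊(C_1)`. -/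
noncomputable def Nsigma (n : ℕ) (lam : Fin n → ℕ) (F : Filling) : ℕ :=
  adjSumN (Nstat n) (colList n lam F) + lplus ((colList n lam F).getLastD [])

/-- `des(σ) = ∑_{i=1}^{m-1} des(C_{i+1}, C_i)`. -/
noncomputable def desSigma (n : ℕ) (lam : Fin n → ℕ) (F : Filling) : ℕ :=
  adjSumN (desStat n) (colList n lam F)

/-! ### Statistics on fillings of the plain shape `λ` (for Proposition 2.2) -/

/-- The descent statistic of a filling of the Young diagram of `λ`, whose
columns are listed from left to right. -/
def desTau (cols : List (List ℤ)) : ℕ :=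
  adjSumN (fun L R => ((Finset.range L.length).filter
    (fun r => slt (R.getD r 0) (L.getD r 0))).card) cols

/-- The complementary inversion statistic `cinv = n(λ) - inv` of a filling of
the Young diagram of `λ` (columns listed from left to right, `C_k` being the
`k`-th column from the right). -/
def cinvTau (cols : List (List ℤ)) : ℕ :=
  ∑ q ∈ Finset.range cols.length,
    (((Finset.range (cols.getD q []).length) ×ˢ (Finset.range (cols.getD q []).length)).filter
      (fun pp => pp.1 < pp.2 ∧
        (((1 ≤ q ∧ pp.2 < (cols.getD (q - 1) []).length) ∧
            slt ((cols.getD q []).getD pp.2 0) ((cols.getD q []).getD pp.1 0) ∧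
            slt ((cols.getD q []).getD pp.1 0) ((cols.getD (q - 1) []).getD pp.2 0)) ∨
          (¬ (1 ≤ q ∧ pp.2 < (cols.getD (q - 1) []).length) ∧
            slt ((cols.getD q []).getD pp.2 0) ((cols.getD q []).getD pp.1 0))))).card

/-! ### Chains for the root systems `C_n` and `B_n` and the conditions (R1), (R2) -/

def isPosRootC (n : ℕ) (β : ℕ × ℤ) : Prop :=
  (1 ≤ β.1 ∧ (β.1 : ℤ) < β.2 ∧ β.2 ≤ (n : ℤ)) ∨
  (1 ≤ β.1 ∧ 0 < -β.2 ∧ (β.1 : ℤ) ≤ -β.2 ∧ -β.2 ≤ (n : ℤ))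

/-- Positive roots of `B_n` use the same symbols; `(i,-i)` encodes `ε_i`. -/
def isPosRootB (n : ℕ) (β : ℕ × ℤ) : Prop := isPosRootC n β

/-- The root of type `B_n` of a symbol: as in type `C` except `(i,-i) ↦ ε_i`. -/
def rootVecB (n : ℕ) (β : ℕ × ℤ) : Fin n → ℤ :=
  if β.2 = -(β.1 : ℤ) then (fun r => if ((r : ℕ) + 1 : ℤ) = (β.1 : ℤ) then 1 else 0)
  else rootVec n β

/-- The coroot of type `B_n`: `ε_i^∨ = 2ε_i`, long roots unchanged. -/
def corootVecB (n : ℕ) (β : ℕ × ℤ) : Fin n → ℤ :=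
  if β.2 = -(β.1 : ℤ) then (fun r => if ((r : ℕ) + 1 : ℤ) = (β.1 : ℤ) then 2 else 0)
  else rootVec n β

/-- `ω_k` in type `C_n`. -/
def omegaC (n k : ℕ) : Fin n → ℤ := fun r => if (r : ℕ) + 1 ≤ k then 1 else 0

/-- `ω_k` in type `B_n` (`ω_n` is half the sum of the `ε_i`). -/
def omegaB (n k : ℕ) : Fin n → ℚ :=
  if k = n then (fun _ => 1/2) else (fun r => if (r : ℕ) + 1 ≤ k then 1 else 0)

/-- type `B`: `Γ'_j = ((1,-j),...,(j-1,-j),(j))`. -/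
def gammaPrimeB (j : ℕ) : List (ℕ × ℤ) := gammaPrime j ++ [(j, -(j : ℤ))]

/-- type `B`: `Γ(k) = Γ'_1 ⋯ Γ'_k Γ_1(k) ⋯ Γ_k(k)` for `k < n`, and
`Γ(n) = Γ'_1 ⋯ Γ'_n`. -/
def gammaChainB (n k : ℕ) : List (ℕ × ℤ) :=
  ((List.range k).map (fun r => gammaPrimeB (r + 1))).flatten
    ++ (if k = n then [] else ((List.range k).map (fun r => gammaJK n (r + 1) k)).flatten)

/-- `(R2)`: the subsequence of all occurrences of `α, β, γ` is a concatenation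
of consecutive pairs `(γ, α)` or `(γ, β)`. -/
def altPairs (g a b : ℕ × ℤ) : List (ℕ × ℤ) → Prop
  | [] => True
  | [_] => False
  | x :: y :: rest => x = g ∧ (y = a ∨ y = b) ∧ altPairs g a b rest

/-! ### Real vector space versions (for hyperplanes) -/

def ipR (n : ℕ) (u v : Fin n → ℝ) : ℝ := ∑ r, u r * v r

def affReflR (n : ℕ) (β : ℕ × ℤ) (c : ℝ) (v : Fin n → ℝ) : Fin n → ℝ :=
  fun r => v r - (ipR n v (fun s => ((corootVec n β s : ℤ) : ℝ)) - c) *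
    ((rootVec n β r : ℤ) : ℝ)

def wActR (n : ℕ) (w : List ℤ) (v : Fin n → ℝ) : Fin n → ℝ := fun r =>
  ∑ i : Fin n, ((if w.getD i 0 = ((r : ℕ) + 1 : ℤ) then v i else 0) +
    (if w.getD i 0 = -(((r : ℕ) + 1 : ℤ)) then -(v i) else 0))

/-- `γ^∨ = (2/⟨γ,γ⟩) γ`. -/
noncomputable def corootOfR (n : ℕ) (v : Fin n → ℝ) : Fin n → ℝ :=
  fun r => (2 / ipR n v v) * v r

/-- The part of the compressed filling of shape `2λ` consisting of the columns
numbered `2λ_1, 2λ_1 - 1, ..., q` (`\barσ[q]`); column `2i` is `C'_{i,2}` and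
column `2i-1` is `C_{i,1}`. -/
def compColsGe (n : ℕ) (lam : Fin n → ℕ) (F : Filling) (q : ℕ) : List (List ℤ) :=
  ((List.range (lamOne n lam)).map (fun t =>
    (if q ≤ 2 * (lamOne n lam - t) then
      [(if 2 ≤ conj n lam (lamOne n lam - t) then F.Cp (lamOne n lam - t) 2
        else F.Cu (lamOne n lam - t) 1)] else []) ++
    (if q ≤ 2 * (lamOne n lam - t) - 1 then [F.Cu (lamOne n lam - t) 1] else []))).flatten

/-! ### The chains `Δ` and `Φ` of Section 6 -/

/-- `Δ = ((1,p+1),...,(1,n),(1,-1),(1,-n),(1,-(n-1)),...,(1,-(p+1)))`. -/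
def deltaChain (n p : ℕ) : List (ℕ × ℤ) :=
  (List.range (n - p)).map (fun r => (1, ((p + 1 + r : ℕ) : ℤ)))
    ++ [(1, (-1 : ℤ))]
    ++ (List.range (n - p)).map (fun r => (1, -((n - r : ℕ) : ℤ)))

/-- The suffix `Δ_{\bar s}` of `Δ` beginning with `(1,-s)`. -/
def deltaSuffixNeg (p s : ℕ) : List (ℕ × ℤ) :=
  (List.range (s - p)).map (fun r => (1, -((s - r : ℕ) : ℤ)))

/-- The suffix `Δ_{\bar 1}` of `Δ` beginning with `(1,-1)`. -/
def deltaSuffixBar1 (n p : ℕ) : List (ℕ × ℤ) :=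
  [(1, (-1 : ℤ))] ++ (List.range (n - p)).map (fun r => (1, -((n - r : ℕ) : ℤ)))

/-- The suffix `Δ_s` of `Δ` beginning with `(1,s)` (for `p < s ≤ n`). -/
def deltaSuffixPos (n p s : ℕ) : List (ℕ × ℤ) :=
  (List.range (n + 1 - s)).map (fun r => (1, ((s + r : ℕ) : ℤ)))
    ++ [(1, (-1 : ℤ))]
    ++ (List.range (n - p)).map (fun r => (1, -((n - r : ℕ) : ℤ)))

/-- `Φ = ((1,-1),(1,-2),(2,-2),...,(1,-n),...,(n-1,-n),(n,-n))`. -/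
def phiChain (n : ℕ) : List (ℕ × ℤ) :=
  ((List.range n).map (fun jm =>
    (List.range (jm + 1)).map (fun im => (im + 1, -((jm + 1 : ℕ) : ℤ))))).flatten

/-- The suffix `Φ_{ij}` of `Φ` beginning with `(i,-j)`. -/
def phiSuffix (n i j : ℕ) : List (ℕ × ℤ) := (phiChain n).drop ((j - 1) * j / 2 + (i - 1))

/-- `ℓ^{ij}_-(w) = #{(k,l) : k ≤ l, (k,-l)` strictly precedes `(i,-j)` in `Φ`,
`w(k) ≻ -w(l)}`. -/
def lminusBefore (w : List ℤ) (i j : ℕ) : ℕ :=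
  (((Finset.range w.length) ×ˢ (Finset.range w.length)).filter
    (fun p => p.1 ≤ p.2 ∧ (p.2 + 1 < j ∨ (p.2 + 1 = j ∧ p.1 + 1 < i)) ∧
      slt (-(w.getD p.2 0)) (w.getD p.1 0))).card

set_option linter.unusedSimpArgs false

/-! ### The order `≺` and length comparisons -/

/-- The indicator, as an integer, of `a ≺ b`. -/
def ind (a b : ℤ) : ℤ := if slt a b then 1 else 0

lemma ind_neg (a b : ℤ) : ind (-a) (-b) = ind b a := by
  unfold ind slt; split_ifs <;> omega

lemma ind_neg_left (a b : ℤ) : ind (-a) b = ind (-b) a := by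
  unfold ind slt; split_ifs <;> omega

lemma slt_asymm {a b : ℤ} (h : slt a b) : ¬ slt b a := by
  unfold slt at *; omega

lemma slt_total {a b : ℤ} (ha : a ≠ 0) (hb : b ≠ 0) (h : a ≠ b) (h' : ¬ slt b a) : slt a b := by
  unfold slt at *; omega

lemma slt_trans {a b c : ℤ} (h : slt a b) (h' : slt b c) : slt a c := by
  unfold slt at *; omega

lemma ind_swap {a b : ℤ} (ha : a ≠ 0) (hb : b ≠ 0) (h : a ≠ b) : ind a b = 1 - ind b a := by
  by_cases h' : slt b a
  · simp [ind, h', slt_asymm h']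
  · simp [ind, h', slt_total ha hb h h']

lemma ind_self_neg {a b : ℤ} (ha : a ≠ 0) (hb : b ≠ 0) :
    ind (-a) a + ind a (-a) = ind (-b) b + ind b (-b) := by
  rw [ind_swap ha (neg_ne_zero.2 ha) (by omega), ind_swap hb (neg_ne_zero.2 hb) (by omega)]
  ring

lemma ind_mono_right {a b : ℤ} (h : slt a b) (x : ℤ) : ind x a ≤ ind x b := by
  by_cases h' : slt x a
  · simp [ind, h', slt_trans h' h]
  · simp only [ind, h', if_false]; split_ifs <;> simp

lemma ind_neg_mono {a b : ℤ} (h : slt a b) : ind (-a) a ≤ ind (-b) b := by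
  unfold ind slt at *; split_ifs <;> omega

/-- The first `n` values of `f` form the window of a signed permutation up to relabelling:
they are nonzero and have pairwise distinct absolute values. -/
structure Good (n : ℕ) (f : ℕ → ℤ) : Prop where
  ne_zero : ∀ p < n, f p ≠ 0
  ne : ∀ p < n, ∀ q < n, p ≠ q → f p ≠ f q
  ne_neg : ∀ p < n, ∀ q < n, p ≠ q → f p ≠ -f q

/-- `g` is obtained from `f` by the reflection `(i, -j)` (positions are 0-based here). -/
structure Refl (i j : ℕ) (f g : ℕ → ℤ) : Prop where
  left : g i = -f j
  right : g j = -f i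
  off : ∀ p, p ≠ i → p ≠ j → g p = f p

lemma Refl.symm {i j : ℕ} {f g : ℕ → ℤ} (h : Refl i j f g) : Refl i j g f :=
  ⟨by rw [h.right, neg_neg], by rw [h.left, neg_neg], fun p hi hj => (h.off p hi hj).symm⟩

/-- A double sum over `range n` vanishing off the rows and columns `i`, `j`. -/
lemma sum_cross {n i j : ℕ} (hij : i < j) (hj : j < n) (G : ℕ → ℕ → ℤ)
    (h0 : ∀ p q, p ≠ i → p ≠ j → q ≠ i → q ≠ j → G p q = 0) :
    ∑ p ∈ Finset.range n, ∑ q ∈ Finset.range n, G p q =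
      G i i + G i j + G j i + G j j +
        ∑ m ∈ ((Finset.range n).erase i).erase j, (G i m + G m i + G j m + G m j) := by
  have key : ∀ H : ℕ → ℤ, ∑ p ∈ Finset.range n, H p =
      H i + H j + ∑ m ∈ ((Finset.range n).erase i).erase j, H m := by
    intro H
    rw [← Finset.add_sum_erase _ _ (Finset.mem_range.2 (hij.trans hj)),
      ← Finset.add_sum_erase ((Finset.range n).erase i) _
        (Finset.mem_erase.2 ⟨hij.ne', Finset.mem_range.2 hj⟩), add_assoc]
  rw [key]
  simp only [key]
  have : ∀ m ∈ ((Finset.range n).erase i).erase j,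
      G m i + G m j + ∑ q ∈ ((Finset.range n).erase i).erase j, G m q = G m i + G m j := by
    intro m hm
    simp only [Finset.mem_erase] at hm
    rw [Finset.sum_eq_zero, add_zero]
    intro q hq
    simp only [Finset.mem_erase] at hq
    exact h0 _ _ hm.2.1 hm.1 hq.2.1 hq.1
  rw [Finset.sum_congr rfl this]
  simp only [Finset.sum_add_distrib]
  ring

lemma sum_cross_diag {n i : ℕ} (hi : i < n) (G : ℕ → ℕ → ℤ)
    (h0 : ∀ p q, p ≠ i → q ≠ i → G p q = 0) :
    ∑ p ∈ Finset.range n, ∑ q ∈ Finset.range n, G p q =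
      G i i + ∑ m ∈ (Finset.range n).erase i, (G i m + G m i) := by
  have key : ∀ H : ℕ → ℤ, ∑ p ∈ Finset.range n, H p =
      H i + ∑ m ∈ (Finset.range n).erase i, H m := by
    intro H
    rw [← Finset.add_sum_erase _ _ (Finset.mem_range.2 hi)]
  rw [key]
  simp only [key]
  have : ∀ m ∈ (Finset.range n).erase i,
      G m i + ∑ q ∈ (Finset.range n).erase i, G m q = G m i := by
    intro m hm
    simp only [Finset.mem_erase] at hm
    rw [Finset.sum_eq_zero, add_zero]
    intro q hq
    simp only [Finset.mem_erase] at hq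
    exact h0 _ _ hm.1 hq.1
  rw [Finset.sum_congr rfl this]
  simp only [Finset.sum_add_distrib]
  ring

/-- `(p, -q)` strictly precedes `(i, -j)` in `Φ`. -/
def Prec (i j p q : ℕ) : Prop := q < j ∨ (q = j ∧ p < i)

/-- `(p, -q)` strictly follows `(i, -j)` in `Φ`. -/
def Foll (i j p q : ℕ) : Prop := j < q ∨ (q = j ∧ i < p)

instance (i j p q : ℕ) : Decidable (Prec i j p q) := by unfold Prec; infer_instance
instance (i j p q : ℕ) : Decidable (Foll i j p q) := by unfold Foll; infer_instance

/-- The contribution of the pair of positions `(p, q)` to `ℓ₊`. -/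
def plusT (f : ℕ → ℤ) (p q : ℕ) : ℤ := if p < q then ind (f q) (f p) else 0

/-- The contribution of `(p, q)` to the part of `ℓ₋` strictly before `(i, -j)`. -/
def precT (i j : ℕ) (f : ℕ → ℤ) (p q : ℕ) : ℤ :=
  if p ≤ q ∧ Prec i j p q then ind (-f q) (f p) else 0

/-- The contribution of `(p, q)` to the part of `ℓ₋` strictly after `(i, -j)`. -/
def follT (i j : ℕ) (f : ℕ → ℤ) (p q : ℕ) : ℤ :=
  if p ≤ q ∧ Foll i j p q then ind (-f q) (f p) else 0

/-- The integer-valued sum of `T p q` over `p, q < n`. -/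
def dsum (n : ℕ) (T : ℕ → ℕ → ℤ) : ℤ := ∑ p ∈ Finset.range n, ∑ q ∈ Finset.range n, T p q

/-- The key identity: the statistic `ℓ₊ + ℓ₋(before) - ℓ₋(after)` is invariant under the reflection
`(i, -j)`. The contributions cancel separately for each position `m ∉ {i, j}`, and for the pairs
inside `{i, j}`. -/
lemma invariant {n i j : ℕ} (hij : i ≤ j) (hj : j < n) {f g : ℕ → ℤ} (hf : Good n f)
    (h : Refl i j f g) :
    dsum n (plusT f) + dsum n (precT i j f) - dsum n (follT i j f) =
      dsum n (plusT g) + dsum n (precT i j g) - dsum n (follT i j g) := by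
  have hi : i < n := lt_of_le_of_lt hij hj
  rw [← sub_eq_zero]
  have e : dsum n (plusT f) + dsum n (precT i j f) - dsum n (follT i j f) -
      (dsum n (plusT g) + dsum n (precT i j g) - dsum n (follT i j g)) =
      dsum n (fun p q => (plusT f p q + precT i j f p q - follT i j f p q) -
        (plusT g p q + precT i j g p q - follT i j g p q)) := by
    simp only [dsum, Finset.sum_add_distrib, Finset.sum_sub_distrib]
  rw [e, dsum]
  rcases hij.eq_or_lt with rfl | hlt
  · rw [sum_cross_diag hj]
    · have hd : ∀ u : ℕ → ℤ, plusT u i i + precT i i u i i - follT i i u i i = 0 := by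
        intro u; simp [plusT, precT, follT, Prec, Foll]
      rw [hd, hd, Finset.sum_eq_zero]; · simp
      intro m hm
      simp only [Finset.mem_erase, Finset.mem_range] at hm
      obtain ⟨hmi, hmn⟩ := hm
      have s1 := ind_swap (hf.ne_zero m hmn) (hf.ne_zero i hi) (hf.ne m hmn i hi hmi)
      have s2 := ind_swap (hf.ne_zero m hmn) (neg_ne_zero.2 (hf.ne_zero i hi))
        (hf.ne_neg m hmn i hi hmi)
      have s3 := ind_neg_left (f m) (f i)
      have s4 := ind_neg (f m) (f i)
      have s5 := ind_neg_left (f m) (-f i)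
      have hm' := h.off m hmi hmi
      -- each order of `m` and `i` leaves a linear identity between indicators
      rcases lt_or_gt_of_ne hmi with hlt | hlt
      · simp [plusT, precT, follT, Prec, Foll, h.left, hm', hlt, hlt.not_gt, hlt.le, hlt.not_ge,
          hlt.ne, hlt.ne'] at *
        linarith
      · simp [plusT, precT, follT, Prec, Foll, h.left, hm', hlt, hlt.not_gt, hlt.le, hlt.not_ge,
          hlt.ne, hlt.ne'] at *
        linarith
    · intro p q hp hq
      simp [plusT, precT, follT, h.off p hp hp, h.off q hq hq]
  · rw [sum_cross hlt hj]
    · rw [Finset.sum_eq_zero]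
      · have d := ind_self_neg (hf.ne_zero i hi) (hf.ne_zero j hj)
        have d2 := ind_neg (f i) (f j)
        simp [plusT, precT, follT, Prec, Foll, h.left, h.right, hlt, hlt.not_gt, hlt.le,
          hlt.not_ge, hlt.ne, hlt.ne'] at *
        linarith
      intro m hm
      simp only [Finset.mem_erase, Finset.mem_range] at hm
      obtain ⟨hmj, hmi, hmn⟩ := hm
      have s1 := ind_swap (hf.ne_zero m hmn) (hf.ne_zero i hi) (hf.ne m hmn i hi hmi)
      have s2 := ind_swap (hf.ne_zero m hmn) (neg_ne_zero.2 (hf.ne_zero i hi))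
        (hf.ne_neg m hmn i hi hmi)
      have s3 := ind_neg_left (f m) (f i)
      have s4 := ind_neg (f m) (f i)
      have s5 := ind_neg_left (f m) (-f i)
      have r1 := ind_swap (hf.ne_zero m hmn) (hf.ne_zero j hj) (hf.ne m hmn j hj hmj)
      have r2 := ind_swap (hf.ne_zero m hmn) (neg_ne_zero.2 (hf.ne_zero j hj))
        (hf.ne_neg m hmn j hj hmj)
      have r3 := ind_neg_left (f m) (f j)
      have r4 := ind_neg (f m) (f j)
      have r5 := ind_neg_left (f m) (-f j)
      have hm' := h.off m hmi hmj
      -- the cases `m < i`, `i < m < j`, `j < m` each leave a linear identity between indicators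
      rcases lt_or_gt_of_ne hmi with hl | hl
      · have hl2 := hl.trans hlt
        simp [plusT, precT, follT, Prec, Foll, h.left, h.right, hm', hl, hl.not_gt, hl.le,
          hl.not_ge, hl.ne, hl.ne', hlt, hlt.not_gt, hlt.le, hlt.not_ge, hlt.ne, hlt.ne',
          hl2, hl2.not_gt, hl2.le, hl2.not_ge, hl2.ne, hl2.ne'] at *
        linarith
      rcases lt_or_gt_of_ne hmj with hl2 | hl2
      · simp [plusT, precT, follT, Prec, Foll, h.left, h.right, hm', hl, hl.not_gt, hl.le,
          hl.not_ge, hl.ne, hl.ne', hlt, hlt.not_gt, hlt.le, hlt.not_ge, hlt.ne, hlt.ne',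
          hl2, hl2.not_gt, hl2.le, hl2.not_ge, hl2.ne, hl2.ne'] at *
        linarith
      · simp [plusT, precT, follT, Prec, Foll, h.left, h.right, hm', hl, hl.not_gt, hl.le,
          hl.not_ge, hl.ne, hl.ne', hlt, hlt.not_gt, hlt.le, hlt.not_ge, hlt.ne, hlt.ne',
          hl2, hl2.not_gt, hl2.le, hl2.not_ge, hl2.ne, hl2.ne'] at *
        linarith
    · intro p q hp hp' hq hq'
      simp [plusT, precT, follT, h.off p hp hp', h.off q hq hq']

/-- The part of `ℓ₋` after `(i, -j)` does not increase under the reflection `(i, -j)` when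
`w(i) ≻ -w(j)`. -/
lemma foll_mono {n i j : ℕ} (hij : i ≤ j) (hj : j < n) {f g : ℕ → ℤ}
    (h : Refl i j f g) (hs : slt (-f j) (f i)) :
    dsum n (follT i j g) ≤ dsum n (follT i j f) := by
  have hs' : slt (-f i) (f j) := by unfold slt at *; omega
  rw [← sub_nonneg]
  have e : dsum n (follT i j f) - dsum n (follT i j g) =
      dsum n (fun p q => follT i j f p q - follT i j g p q) := by
    simp only [dsum, Finset.sum_sub_distrib]
  rw [e, dsum]
  rcases hij.eq_or_lt with rfl | hlt
  · rw [sum_cross_diag hj]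
    · have hd : ∀ u : ℕ → ℤ, follT i i u i i = 0 := by
        intro u; simp [follT, Foll]
      rw [hd, hd, sub_zero, zero_add]
      refine Finset.sum_nonneg fun m hm => ?_
      simp only [Finset.mem_erase, Finset.mem_range] at hm
      have hm' := h.off m hm.1 hm.1
      have s := ind_mono_right hs (-f m)
      rcases lt_or_gt_of_ne hm.1 with hl | hl <;>
      · simp [follT, Foll, h.left, hm', hl, hl.not_gt, hl.le, hl.not_ge, hl.ne, hl.ne'] at *
        try linarith
    · intro p q hp hq
      simp [follT, h.off p hp hp, h.off q hq hq]
  · rw [sum_cross hlt hj]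
    · refine add_nonneg ?_ (Finset.sum_nonneg fun m hm => ?_)
      · have d := ind_neg_mono hs'
        simp [follT, Foll, h.left, h.right, hlt, hlt.not_gt, hlt.le,
          hlt.not_ge, hlt.ne, hlt.ne'] at *
        linarith
      simp only [Finset.mem_erase, Finset.mem_range] at hm
      obtain ⟨hmj, hmi, hmn⟩ := hm
      have hm' := h.off m hmi hmj
      have s := ind_mono_right hs (-f m)
      have s' := ind_mono_right hs' (-f m)
      have s2 := ind_neg_left (f m) (f j)
      have s3 := ind_neg_left (f m) (-f i)
      have s4 := ind_neg_left (f m) (f i)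
      have s5 := ind_neg_left (f m) (-f j)
      rcases lt_or_gt_of_ne hmi with hl | hl
      · have hl2 := hl.trans hlt
        simp [follT, Foll, h.left, h.right, hm', hl, hl.not_gt, hl.le,
          hl.not_ge, hl.ne, hl.ne', hlt, hlt.not_gt, hlt.le, hlt.not_ge, hlt.ne, hlt.ne',
          hl2, hl2.not_gt, hl2.le, hl2.not_ge, hl2.ne, hl2.ne'] at *
      rcases lt_or_gt_of_ne hmj with hl2 | hl2 <;>
      · simp [follT, Foll, h.left, h.right, hm', hl, hl.not_gt, hl.le,
          hl.not_ge, hl.ne, hl.ne', hlt, hlt.not_gt, hlt.le, hlt.not_ge, hlt.ne, hlt.ne',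
          hl2, hl2.not_gt, hl2.le, hl2.not_ge, hl2.ne, hl2.ne'] at *
        linarith
    · intro p q hp hp' hq hq'
      simp [follT, h.off p hp hp', h.off q hq hq']

/-! ### From windows to functions -/

/-- The entries of a window as a function of the 0-based position. -/
def ent (w : List ℤ) (p : ℕ) : ℤ := w.getD p 0

/-- Windows of length `n` with nonzero entries of pairwise distinct absolute values. -/
def GoodW (n : ℕ) (w : List ℤ) : Prop := w.length = n ∧ Good n (ent w)

lemma goodW_of_mem {n : ℕ} {w : List ℤ} (hw : w ∈ allWindows n) : GoodW n w := by
  simp only [allWindows, Finset.mem_image, Finset.mem_univ, true_and] at hw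
  obtain ⟨⟨s, e⟩, rfl⟩ := hw
  have hent : ∀ (p : ℕ) (hp : p < n), ent ((List.finRange n).map (fun i =>
      if e i then -(((s i : ℕ) : ℤ) + 1) else ((s i : ℕ) : ℤ) + 1)) p =
      if e ⟨p, hp⟩ then -(((s ⟨p, hp⟩ : ℕ) : ℤ) + 1) else ((s ⟨p, hp⟩ : ℕ) : ℤ) + 1 := by
    intro p hp
    simp [ent, List.getD_eq_getElem?_getD, hp]
  have hs : ∀ (p q : ℕ) (hp : p < n) (hq : q < n), p ≠ q →
      (s ⟨p, hp⟩ : ℕ) ≠ (s ⟨q, hq⟩ : ℕ) := by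
    intro p q hp hq hpq h
    have := s.injective (Fin.ext h)
    simp at this
    exact hpq this
  refine ⟨by simp, ?_, ?_, ?_⟩
  · intro p hp
    rw [hent p hp]
    split_ifs <;> omega
  · intro p hp q hq hpq
    rw [hent p hp, hent q hq]
    have := hs p q hp hq hpq
    split_ifs <;> omega
  · intro p hp q hq hpq
    rw [hent p hp, hent q hq]
    have := hs p q hp hq hpq
    split_ifs <;> omega

/-- The reflection `(i+1, -(j+1))` in the 1-based encoding used by `applyRefl`. -/
def phiRefl (i j : ℕ) : ℕ × ℤ := (i + 1, -((j + 1 : ℕ) : ℤ))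

lemma length_applyRefl (w : List ℤ) (t : ℕ × ℤ) : (applyRefl w t).length = w.length := by
  unfold applyRefl; split_ifs <;> simp

lemma refl_applyRefl {n i j : ℕ} (hij : i ≤ j) (hj : j < n) {w : List ℤ} (hw : w.length = n) :
    Refl i j (ent w) (ent (applyRefl w (phiRefl i j))) := by
  have hneg : ¬ (0 < (phiRefl i j).2) := by simp [phiRefl]
  have hto : (-(phiRefl i j).2).toNat = j + 1 := by simp only [phiRefl]; omega
  have h1 : (phiRefl i j).1 = i + 1 := rfl
  unfold applyRefl
  rw [if_neg hneg, hto, h1]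
  subst hw
  have hi : i < w.length := by omega
  rcases hij.eq_or_lt with rfl | hlt
  · refine ⟨?_, ?_, ?_⟩
    · simp [ent, List.getD_eq_getElem?_getD, hi]
    · simp [ent, List.getD_eq_getElem?_getD, hi]
    · intro p hp _
      simp [ent, List.getD_eq_getElem?_getD, List.getElem?_set_ne hp.symm]
  · rw [if_neg (by omega)]
    refine ⟨?_, ?_, ?_⟩
    · simp [ent, List.getD_eq_getElem?_getD, hi, hj, hlt.ne']
    · simp [ent, List.getD_eq_getElem?_getD, hi, hj]
    · intro p hp hp'
      simp [ent, List.getD_eq_getElem?_getD, List.getElem?_set_ne hp.symm,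
        List.getElem?_set_ne hp'.symm]

lemma Good.refl {n i j : ℕ} (hi : i < n) (hj : j < n) {f g : ℕ → ℤ} (hf : Good n f)
    (h : Refl i j f g) : Good n g := by
  obtain ⟨z, e, en⟩ := hf
  obtain ⟨hl, hr, ho⟩ := h
  have val : ∀ p < n, ∃ q < n, (p ≠ i ∧ p ≠ j ∧ q = p ∧ g p = f q) ∨
      (p = i ∧ q = j ∧ g p = -f q) ∨ (p = j ∧ q = i ∧ g p = -f q) := by
    intro p hp
    by_cases h1 : p = i
    · exact ⟨j, hj, Or.inr (Or.inl ⟨h1, rfl, h1 ▸ hl⟩)⟩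
    by_cases h2 : p = j
    · exact ⟨i, hi, Or.inr (Or.inr ⟨h2, rfl, h2 ▸ hr⟩)⟩
    · exact ⟨p, hp, Or.inl ⟨h1, h2, rfl, ho p h1 h2⟩⟩
  refine ⟨?_, ?_, ?_⟩
  · intro p hp
    obtain ⟨q, hq, h⟩ := val p hp
    have := z q hq
    omega
  all_goals
    intro p hp p' hp' hpp
    obtain ⟨q, hq, h⟩ := val p hp
    obtain ⟨q', hq', h'⟩ := val p' hp'
    have h1 := e q hq q' hq' (by omega)
    have h2 := en q hq q' hq' (by omega)
    omega

lemma GoodW.applyRefl {n i j : ℕ} (hij : i ≤ j) (hj : j < n) {w : List ℤ} (hw : GoodW n w) :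
    GoodW n (applyRefl w (phiRefl i j)) :=
  ⟨by rw [length_applyRefl, hw.1], hw.2.refl (by omega) hj (refl_applyRefl hij hj hw.1)⟩

lemma card_eq_dsum (n : ℕ) (P : ℕ × ℕ → Prop) [DecidablePred P] :
    ((((Finset.range n) ×ˢ (Finset.range n)).filter P).card : ℤ) =
      dsum n (fun p q => if P (p, q) then 1 else 0) := by
  rw [Finset.card_filter, Finset.sum_product]
  simp [dsum]

lemma lplus_eq {n : ℕ} {w : List ℤ} (hw : w.length = n) : (lplus w : ℤ) = dsum n (plusT (ent w)) := by
  subst hw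
  rw [lplus, card_eq_dsum]
  refine Finset.sum_congr rfl fun p _ => Finset.sum_congr rfl fun q _ => ?_
  simp only [plusT, ind, ent]
  grind

lemma lminusBefore_eq {n : ℕ} {w : List ℤ} (hw : w.length = n) (i j : ℕ) :
    (lminusBefore w (i + 1) (j + 1) : ℤ) = dsum n (precT i j (ent w)) := by
  subst hw
  rw [lminusBefore, card_eq_dsum]
  refine Finset.sum_congr rfl fun p _ => Finset.sum_congr rfl fun q _ => ?_
  simp only [precT, ind, ent, Prec, add_lt_add_iff_right, add_left_inj]
  grind

lemma ind_eq_dsum {n i j : ℕ} (hi : i < n) (hj : j < n) (f : ℕ → ℤ) :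
    ind (-f j) (f i) =
      dsum n (fun p q => if p = i then if q = j then ind (-f q) (f p) else 0 else 0) := by
  simp only [dsum]
  rw [Finset.sum_eq_single i, Finset.sum_eq_single j]
  · simp
  · intro b _ hb; simp [hb]
  · intro h; simp [hj] at h
  · intro b _ hb; simp [hb]
  · intro h; simp [hi] at h

/-- Splitting `ℓ₋` at the pair `(i, -j)`. -/
lemma lminus_eq {n i j : ℕ} (hij : i ≤ j) (hj : j < n) {w : List ℤ} (hw : w.length = n) :
    (lminus w : ℤ) = dsum n (precT i j (ent w)) + ind (-ent w j) (ent w i) +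
      dsum n (follT i j (ent w)) := by
  subst hw
  rw [lminus, card_eq_dsum, ind_eq_dsum (by omega) hj]
  simp only [dsum, ← Finset.sum_add_distrib]
  refine Finset.sum_congr rfl fun p _ => Finset.sum_congr rfl fun q _ => ?_
  have e' : (if p ≤ q ∧ slt (-w.getD q 0) (w.getD p 0) then (1 : ℤ) else 0) =
      if p ≤ q then ind (-ent w q) (ent w p) else 0 := by
    simp only [ind, ent]
    grind
  rw [e']
  unfold precT follT Prec Foll
  generalize ind (-ent w q) (ent w p) = x
  split_ifs <;> omega

lemma lminusBefore_succ {n i j : ℕ} (hij : i ≤ j) (hj : j < n) {w : List ℤ} (hw : w.length = n) :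
    (lminusBefore w (i + 2) (j + 1) : ℤ) =
      lminusBefore w (i + 1) (j + 1) + ind (-ent w j) (ent w i) := by
  rw [lminusBefore_eq hw (i + 1), lminusBefore_eq hw i]
  subst hw
  rw [ind_eq_dsum (by omega) hj]
  simp only [dsum, ← Finset.sum_add_distrib]
  refine Finset.sum_congr rfl fun p _ => Finset.sum_congr rfl fun q _ => ?_
  unfold precT Prec
  generalize ind (-ent w q) (ent w p) = x
  split_ifs <;> omega

/-- After the last reflection `(j, -j)` of a block comes `(1, -(j+1))`. -/
lemma lminusBefore_block (w : List ℤ) (j : ℕ) :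
    lminusBefore w (j + 2) (j + 1) = lminusBefore w 1 (j + 2) := by
  unfold lminusBefore
  congr 1
  apply Finset.filter_congr
  intro p _
  constructor <;> rintro ⟨h1, h2, h3⟩ <;> exact ⟨h1, by omega, h3⟩

lemma lminusBefore_last {n : ℕ} {w : List ℤ} (hw : w.length = n) :
    lminusBefore w 1 (n + 1) = lminus w := by
  subst hw
  unfold lminusBefore lminus
  congr 1
  apply Finset.filter_congr
  intro p hp
  simp only [Finset.mem_product, Finset.mem_range] at hp
  constructor
  · rintro ⟨h1, h2, h3⟩; exact ⟨h1, h3⟩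
  · rintro ⟨h1, h3⟩; exact ⟨h1, by omega, h3⟩

/-- If `w(i) ≻ -w(j)`, the reflection `(i, -j)` lowers the length by `2d + 1`, and `d` is also
the drop of `ℓ₊ + ℓ₋(before)`. -/
lemma step_down {n i j : ℕ} (hij : i ≤ j) (hj : j < n) {w : List ℤ} (hw : GoodW n w)
    (hs : slt (-ent w j) (ent w i)) :
    ∃ d : ℕ, len w = len (applyRefl w (phiRefl i j)) + 2 * d + 1 ∧
      lplus w + lminusBefore w (i + 1) (j + 1) =
        lplus (applyRefl w (phiRefl i j)) + lminusBefore (applyRefl w (phiRefl i j)) (i + 2) (j + 1) + d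
      ∧ lminusBefore w (i + 2) (j + 1) = lminusBefore w (i + 1) (j + 1) + 1 := by
  have hr := refl_applyRefl hij hj hw.1
  have hw' := hw.applyRefl hij hj
  set w' := applyRefl w (phiRefl i j)
  have inv := invariant hij hj hw.2 hr
  have mono := foll_mono hij hj hr hs
  have a1 := lminus_eq hij hj hw.1
  have a2 := lminus_eq hij hj hw'.1
  have b1 := lplus_eq hw.1
  have b2 := lplus_eq hw'.1
  have c1 := lminusBefore_eq hw.1 i j
  have c2 := lminusBefore_eq hw'.1 i j
  have d1 := lminusBefore_succ hij hj hw.1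
  have d2 := lminusBefore_succ hij hj hw'.1
  have x1 : ind (-ent w j) (ent w i) = 1 := by simp [ind, hs]
  have x2 : ind (-ent w' j) (ent w' i) = 0 := by
    rw [hr.left, hr.right, neg_neg]; simp [ind, slt_asymm hs]
  refine ⟨(dsum n (follT i j (ent w)) - dsum n (follT i j (ent w'))).toNat, ?_, ?_, ?_⟩
  · unfold len; omega
  · omega
  · omega

/-- Otherwise the length goes up. -/
lemma step_up {n i j : ℕ} (hij : i ≤ j) (hj : j < n) {w : List ℤ} (hw : GoodW n w)
    (hs : ¬ slt (-ent w j) (ent w i)) :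
    len w < len (applyRefl w (phiRefl i j)) ∧
      lminusBefore w (i + 2) (j + 1) = lminusBefore w (i + 1) (j + 1) := by
  have hi : i < n := by omega
  have hr := refl_applyRefl hij hj hw.1
  have hw' := hw.applyRefl hij hj
  have hs' : slt (ent w i) (-ent w j) := by
    have z1 := hw.2.ne_zero i hi
    have z2 := hw.2.ne_zero j hj
    refine slt_total z1 (neg_ne_zero.2 z2) ?_ hs
    rcases hij.eq_or_lt with rfl | hlt
    · omega
    · exact hw.2.ne_neg i hi j hj hlt.ne
  set w' := applyRefl w (phiRefl i j)
  have inv := invariant hij hj hw.2 hr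
  have mono := foll_mono hij hj hr.symm (by rw [hr.left, hr.right, neg_neg]; exact hs')
  have a1 := lminus_eq hij hj hw.1
  have a2 := lminus_eq hij hj hw'.1
  have b1 := lplus_eq hw.1
  have b2 := lplus_eq hw'.1
  have d1 := lminusBefore_succ hij hj hw.1
  have x1 : ind (-ent w j) (ent w i) = 0 := by simp [ind, hs]
  have x2 : ind (-ent w' j) (ent w' i) = 1 := by
    rw [hr.left, hr.right, neg_neg]; simp [ind, hs']
  constructor
  · unfold len; omega
  · omega

/-! ### Sums over subsequences -/

lemma selChain_map_succ (t : ℕ × ℤ) (L : List (ℕ × ℤ)) (J : Finset ℕ) :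
    selChain (t :: L) (J.map ⟨Nat.succ, Nat.succ_injective⟩) = selChain L J := by
  unfold selChain
  rw [← Finset.map_sort (r := (· ≤ ·)) (hs := by intro a _ b _; simp), List.map_map]
  apply List.map_congr_left
  intro a _
  simp

lemma selChain_insert_zero (t : ℕ × ℤ) (L : List (ℕ × ℤ)) (J : Finset ℕ) :
    selChain (t :: L) (insert 0 (J.map ⟨Nat.succ, Nat.succ_injective⟩)) = t :: selChain L J := by
  rw [← selChain_map_succ t L J]
  unfold selChain
  rw [Finset.sort_insert _ (by simp) (by simp)]
  simp

lemma length_selChain (L : List (ℕ × ℤ)) (J : Finset ℕ) : (selChain L J).length = J.card := by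
  simp [selChain]

/-- Position sets in `range L.length` enumerate the subsequences of `L`. -/
lemma sum_selChain {M : Type*} [AddCommMonoid M] (L : List (ℕ × ℤ)) (F : List (ℕ × ℤ) → M) :
    ∑ J ∈ (Finset.range L.length).powerset, F (selChain L J) = (L.sublists'.map F).sum := by
  induction L generalizing F with
  | nil => simp [selChain]
  | cons t L ih =>
    have hr : Finset.range (t :: L).length =
        insert 0 ((Finset.range L.length).map ⟨Nat.succ, Nat.succ_injective⟩) := by
      ext a; cases a <;> simp
    have hp : ∀ G : Finset ℕ → M,
        ∑ J ∈ ((Finset.range L.length).map ⟨Nat.succ, Nat.succ_injective⟩).powerset, G J =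
        ∑ J ∈ (Finset.range L.length).powerset, G (J.map ⟨Nat.succ, Nat.succ_injective⟩) := by
      intro G
      symm
      refine Finset.sum_bij (fun J _ => J.map ⟨Nat.succ, Nat.succ_injective⟩) ?_ ?_ ?_ ?_
      · intro J hJ
        simpa using hJ
      · intro J _ J' _ h
        exact Finset.map_injective _ h
      · intro J hJ
        rw [Finset.mem_powerset, Finset.subset_map_iff] at hJ
        obtain ⟨J', h, rfl⟩ := hJ
        exact ⟨J', Finset.mem_powerset.2 h, rfl⟩
      · intros; rfl
    rw [hr, Finset.sum_powerset_insert (by simp), hp, hp]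
    simp only [selChain_map_succ, selChain_insert_zero]
    rw [ih, ih (fun T => F (t :: T)), List.sublists'_cons, List.map_append, List.sum_append,
      List.map_map]
    rfl

open Polynomial in
/-- The summand attached to a subsequence `T`, zero unless `T` is `w`-admissible. -/
noncomputable def term (w : List ℤ) (T : List (ℕ × ℤ)) : ℤ[X] :=
  if decChain w T = true then
    X ^ ((len w + len (applyAll w T) - T.length) / 2) * (1 - X) ^ T.length else 0

/-- The sum of all terms over the subsequences of `L`. -/
noncomputable def subSum (w : List ℤ) (L : List (ℕ × ℤ)) : Polynomial ℤ :=
  (L.sublists'.map (term w)).sum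

/-- The reflections `(i, -j)` with `1 ≤ i ≤ j ≤ n`. -/
def IsPhi (n : ℕ) (t : ℕ × ℤ) : Prop := ∃ i j, i ≤ j ∧ j < n ∧ t = phiRefl i j

/-- A reflection in `Φ` that shortens `w` changes the length by an odd amount. -/
lemma len_drop {n : ℕ} {w : List ℤ} (hw : GoodW n w) {t : ℕ × ℤ} (ht : IsPhi n t)
    (h : len (applyRefl w t) < len w) : ∃ d, len w = len (applyRefl w t) + 2 * d + 1 := by
  obtain ⟨i, j, hij, hj, rfl⟩ := ht
  by_cases hs : slt (-ent w j) (ent w i)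
  · obtain ⟨d, hd, -⟩ := step_down hij hj hw hs
    exact ⟨d, hd⟩
  · have := (step_up hij hj hw hs).1
    omega

/-- Along an admissible sequence the exponent `(ℓ(w) + ℓ(wT) - |T|)/2` is an honest
nonnegative integer. -/
lemma chain_parity {n : ℕ} {w : List ℤ} (hw : GoodW n w) {T : List (ℕ × ℤ)}
    (hT : ∀ t ∈ T, IsPhi n t) (h : decChain w T = true) :
    ∃ e, len w = len (applyAll w T) + T.length + 2 * e := by
  induction T generalizing w with
  | nil => exact ⟨0, rfl⟩
  | cons t T ih =>
    simp only [decChain, Bool.and_eq_true, decide_eq_true_eq] at h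
    have ht := hT t (by simp)
    obtain ⟨d, hd⟩ := len_drop hw ht h.1
    have hw' : GoodW n (applyRefl w t) := by
      obtain ⟨i, j, hij, hj, rfl⟩ := ht
      exact hw.applyRefl hij hj
    obtain ⟨e, he⟩ := ih hw' (fun t ht => hT t (by simp [ht])) h.2
    refine ⟨e + d, ?_⟩
    change _ = len (applyAll (applyRefl w t) T) + (T.length + 1) + _
    omega

open Polynomial in
lemma term_cons {n : ℕ} {w : List ℤ} (hw : GoodW n w) {t : ℕ × ℤ} {T : List (ℕ × ℤ)}
    (hT : ∀ s ∈ t :: T, IsPhi n s) {d : ℕ} (hd : len w = len (applyRefl w t) + 2 * d + 1) :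
    term w (t :: T) = X ^ d * (1 - X) * term (applyRefl w t) T := by
  have hw' : GoodW n (applyRefl w t) := by
    obtain ⟨i, j, hij, hj, rfl⟩ := hT t (by simp)
    exact hw.applyRefl hij hj
  have hlt : len (applyRefl w t) < len w := by omega
  have happ : applyAll w (t :: T) = applyAll (applyRefl w t) T := rfl
  by_cases h : decChain (applyRefl w t) T = true
  · obtain ⟨e, he⟩ := chain_parity hw' (fun t ht => hT t (by simp [ht])) h
    have hexp : (len w + len (applyAll (applyRefl w t) T) - (T.length + 1)) / 2 =
        d + (len (applyRefl w t) + len (applyAll (applyRefl w t) T) - T.length) / 2 := by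
      omega
    simp only [term, decChain, h, hlt, decide_true, Bool.and_self, if_true, happ,
      List.length_cons, hexp, pow_add]
    ring
  · simp [term, decChain, h]

lemma term_cons_up {w : List ℤ} {t : ℕ × ℤ} {T : List (ℕ × ℤ)}
    (h : ¬ len (applyRefl w t) < len w) : term w (t :: T) = 0 := by
  simp only [term, decChain, h, decide_false, Bool.false_and]
  simp

lemma subSum_cons (w : List ℤ) (t : ℕ × ℤ) (L : List (ℕ × ℤ)) :
    subSum w (t :: L) = subSum w L + (L.sublists'.map (fun T => term w (t :: T))).sum := by
  simp only [subSum, List.sublists'_cons, List.map_append, List.sum_append, List.map_map]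
  rfl

open Polynomial in
/-- The recursive step: putting `(i, -j)` in front of a list of later reflections changes the
predicted exponent from the one for the successor of `(i, -j)` to the one for `(i, -j)`. -/
lemma subSum_step {n i j : ℕ} (hij : i ≤ j) (hj : j < n) {L : List (ℕ × ℤ)}
    (hL : ∀ t ∈ L, IsPhi n t)
    (ih : ∀ w, GoodW n w → subSum w L = X ^ (lplus w + lminusBefore w (i + 2) (j + 1)))
    {w : List ℤ} (hw : GoodW n w) :
    subSum w (phiRefl i j :: L) = X ^ (lplus w + lminusBefore w (i + 1) (j + 1)) := by
  have hphi : IsPhi n (phiRefl i j) := ⟨i, j, hij, hj, rfl⟩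
  rw [subSum_cons, ih w hw]
  by_cases hs : slt (-ent w j) (ent w i)
  · obtain ⟨d, hd, hA, hB⟩ := step_down hij hj hw hs
    have hmap : L.sublists'.map (fun T => term w (phiRefl i j :: T)) =
        L.sublists'.map (fun T => X ^ d * (1 - X) * term (applyRefl w (phiRefl i j)) T) := by
      apply List.map_congr_left
      intro T hT
      refine term_cons hw ?_ hd
      intro s hs
      rcases List.mem_cons.1 hs with rfl | hs
      · exact hphi
      · exact hL s ((List.mem_sublists'.1 hT).subset hs)
    rw [hmap, List.sum_map_mul_left]
    change _ + _ * subSum _ L = _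
    rw [ih _ (hw.applyRefl hij hj), hB, hA, ← add_assoc, hA]
    ring
  · obtain ⟨hup, hB⟩ := step_up hij hj hw hs
    have hmap : L.sublists'.map (fun T => term w (phiRefl i j :: T)) =
        L.sublists'.map (fun _ => 0) := by
      apply List.map_congr_left
      intro T _
      exact term_cons_up (by omega)
    rw [hmap, hB]
    simp

/-! ### Suffixes of `Φ` -/

/-- The block `(1,-j), ..., (j,-j)` of `Φ` with `j = b + 1`. -/
def block (b : ℕ) : List (ℕ × ℤ) := (List.range (b + 1)).map (fun a => phiRefl a b)

/-- The concatenation of the blocks with (0-based) indices `j, ..., j + k - 1`. -/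
def blocks (j k : ℕ) : List (ℕ × ℤ) := ((List.range' j k).map block).flatten

lemma length_blocks (k : ℕ) : (blocks 0 k).length = k * (k + 1) / 2 := by
  induction k with
  | zero => rfl
  | succ k ih =>
    have : blocks 0 (k + 1) = blocks 0 k ++ block k := by
      simp [blocks, List.range'_concat]
    rw [this, List.length_append, ih]
    have : (k + 1) * (k + 1 + 1) = k * (k + 1) + 2 * (k + 1) := by ring
    rw [this, Nat.add_mul_div_left _ _ (by norm_num)]
    simp [block]

lemma phiChain_eq (n j : ℕ) (hj : j ≤ n) : phiChain n = blocks 0 j ++ blocks j (n - j) := by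
  obtain ⟨k, rfl⟩ := Nat.exists_eq_add_of_le hj
  have : phiChain (j + k) = blocks 0 (j + k) := by
    rw [phiChain, blocks, ← List.range_eq_range']
    rfl
  rw [this, Nat.add_sub_cancel_left]
  simp only [blocks]
  rw [← List.flatten_append, ← List.map_append]
  have := @List.range'_append_1 0 j k
  rw [zero_add] at this
  rw [this]

lemma phiSuffix_eq {n i j : ℕ} (hj : j ≤ n) :
    phiSuffix n (i + 1) (j + 1) = (blocks j (n - j)).drop i := by
  rw [phiSuffix, phiChain_eq n j hj]
  simp only [Nat.add_sub_cancel]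
  rw [← length_blocks, List.drop_length_add_append]

lemma phiSuffix_cons {n i j : ℕ} (hij : i ≤ j) (hj : j < n) :
    phiSuffix n (i + 1) (j + 1) = phiRefl i j :: phiSuffix n (i + 2) (j + 1) := by
  rw [phiSuffix_eq hj.le, phiSuffix_eq (i := i + 1) hj.le]
  obtain ⟨k, hk⟩ : ∃ k, n - j = k + 1 := ⟨n - j - 1, by omega⟩
  have hb : blocks j (n - j) = block j ++ blocks (j + 1) k := by
    rw [hk]; simp [blocks, List.range'_succ]
  have hlen : i < (blocks j (n - j)).length := by rw [hb]; simp [block]; omega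
  rw [List.drop_eq_getElem_cons hlen]
  congr 1
  simp only [hb]
  rw [List.getElem_append_left (by simp [block]; omega)]
  simp [block]

lemma phiSuffix_block {n j : ℕ} (hj : j < n) :
    phiSuffix n (j + 2) (j + 1) = phiSuffix n 1 (j + 2) := by
  rw [phiSuffix_eq (i := j + 1) hj.le, phiSuffix_eq (i := 0) (j := j + 1) hj]
  obtain ⟨k, hk⟩ : ∃ k, n - j = k + 1 := ⟨n - j - 1, by omega⟩
  have hb : blocks j (n - j) = block j ++ blocks (j + 1) k := by
    rw [hk]; simp [blocks, List.range'_succ]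
  have hl : (block j).length = j + 1 := by simp [block]
  rw [hb, ← hl, List.drop_left, List.drop_zero]
  congr 1
  omega

lemma isPhi_of_mem {n i j : ℕ} {t : ℕ × ℤ} (ht : t ∈ phiSuffix n i j) : IsPhi n t := by
  have := List.mem_of_mem_drop ht
  simp only [phiChain, List.mem_flatten, List.mem_map, List.mem_range] at this
  obtain ⟨_, ⟨b, hb, rfl⟩, h⟩ := this
  simp only [List.mem_map, List.mem_range] at h
  obtain ⟨a, ha, rfl⟩ := h
  exact ⟨a, b, by omega, hb, rfl⟩

open Polynomial in
/-- The theorem in 0-based coordinates, by descending induction along `Φ`. The value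
`i = j + 1` is allowed: it stands for the position just after the block of `j`. -/
lemma subSum_phiSuffix (n : ℕ) : ∀ k j, j + k = n → ∀ m i, i + m = j + 1 → (k = 0 → i = 0) →
    ∀ w, GoodW n w → subSum w (phiSuffix n (i + 1) (j + 1)) =
      X ^ (lplus w + lminusBefore w (i + 1) (j + 1)) := by
  intro k
  induction k with
  | zero =>
    intro j hj m i _ hi w hw
    obtain rfl : j = n := by omega
    obtain rfl := hi rfl
    have hnil : phiSuffix j (0 + 1) (j + 1) = [] := by
      rw [phiSuffix_eq le_rfl]; simp [blocks]
    rw [hnil, lminusBefore_last hw.1]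
    have : (len w + len w) / 2 = len w := by omega
    simp [subSum, term, decChain, applyAll, this]
    rfl
  | succ k ihk =>
    intro j hj m
    induction m with
    | zero =>
      intro i hi _ w hw
      obtain rfl : i = j + 1 := by omega
      rw [phiSuffix_block (by omega), lminusBefore_block]
      exact ihk (j + 1) (by omega) (j + 2) 0 (by omega) (fun _ => rfl) w hw
    | succ m ihm =>
      intro i hi _ w hw
      rw [phiSuffix_cons (by omega) (by omega)]
      exact subSum_step (by omega) (by omega) (fun t ht => isPhi_of_mem ht)
        (fun w hw => ihm (i + 1) (by omega) (by simp) w hw) hw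


/-- Proposition 6.4: summing over all `w`-admissible
subsequences of the suffix `Φ_{ij}` of `Φ` gives `t^{ℓ₊(w) + ℓ^{ij}_-(w)}`. -/
theorem phi_sum_suffix (n i j : ℕ) (h1 : 1 ≤ i) (h2 : i ≤ j) (h3 : j ≤ n)
    (w : List ℤ) (hw : w ∈ allWindows n) :
    (∑ᶠ (J : Finset ℕ) (_ : J ⊆ Finset.range (phiSuffix n i j).length ∧
        decChain w (selChain (phiSuffix n i j) J) = true),
      (Polynomial.X : Polynomial ℤ) ^
          ((len w + len (applyAll w (selChain (phiSuffix n i j) J)) - J.card) / 2) *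
        (1 - Polynomial.X) ^ J.card)
      = (Polynomial.X : Polynomial ℤ) ^ (lplus w + lminusBefore w i j) := by
  obtain ⟨i, rfl⟩ : ∃ i', i = i' + 1 := ⟨i - 1, by omega⟩
  obtain ⟨j, rfl⟩ : ∃ j', j = j' + 1 := ⟨j - 1, by omega⟩
  have main := subSum_phiSuffix n (n - j) j (by omega) (j + 1 - i) i (by omega) (by omega) w
    (goodW_of_mem hw)
  -- the finsum over position sets is the sum of `term` over all subsequences of the suffix
  rw [← main, subSum, ← sum_selChain]
  simp only [term, ← Finset.sum_filter, length_selChain]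
  rw [← finsum_mem_coe_finset]
  simp only [Finset.coe_filter, Set.mem_ofPred_eq, Finset.mem_powerset]
end HL
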